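/- Let p and q be finite probability vectors. If H_α(p) < H_α(q) for every α ∈ [0, ∞] (Rényi entropies, including H₀, the Shannon entropy H₁, and H_∞), then there exists N such that for every n ≥ N, p^{⊗n} majorizes q^{⊗n}. Conversely, if p^{⊗n} majorizes q^{⊗n} for some n ≥ 1, then H_α(p) ≤ H_α(q) for every α ∈ [0, ∞]. -/

import Mathlib

open scoped BigOperators NNReal

noncomputable section

/-- A probability vector on a finite index type. -/
def IsProbVec {ι : Type*} [Fintype ι] (p : ι → ℝ) : Prop :=
  (∀ i, 0 ≤ p i) ∧ ∑ i, p i = 1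

/-- A (column-)stochastic matrix: nonnegative entries, every column sums to `1`. -/
def IsStochastic {ι κ : Type*} [Fintype ι] [Fintype κ] (T : ι → κ → ℝ) : Prop :=
  (∀ i j, 0 ≤ T i j) ∧ ∀ j, ∑ i, T i j = 1

/-- Matrix–vector multiplication. -/
def matVec {ι κ : Type*} [Fintype κ] (T : ι → κ → ℝ) (v : κ → ℝ) : ι → ℝ :=
  fun i => ∑ j, T i j * v j

/-- Kronecker product of two vectors. -/
def kron {ι κ : Type*} (p : ι → ℝ) (q : κ → ℝ) : ι × κ → ℝ :=
  fun x => p x.1 * q x.2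

/-- `n`-fold Kronecker power of a vector. -/
def kpow {ι : Type*} (p : ι → ℝ) (n : ℕ) : (Fin n → ι) → ℝ :=
  fun f => ∏ j, p (f j)

/-- Kronecker product reindexed along `Fin (m * n)`. -/
def kronFin {m n : ℕ} (p : Fin m → ℝ) (q : Fin n → ℝ) : Fin (m * n) → ℝ :=
  fun i => kron p q (finProdFinEquiv.symm i)

/-- The sum of the `k` largest entries of a nonnegative vector, expressed as the
largest sum over subsets of cardinality at most `k`. -/
def topSum {ι : Type*} [Fintype ι] (p : ι → ℝ) (k : ℕ) : ℝ :=
  ⨆ s ∈ {s : Finset ι | s.card ≤ k}, ∑ i ∈ s, p i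

/-- Majorization for nonnegative vectors (possibly of different lengths):
equal total sums, and for each `k` the sum of the `k` largest entries of `p` is
at least that of `q`. -/
def Majorizes {ι κ : Type*} [Fintype ι] [Fintype κ] (p : ι → ℝ) (q : κ → ℝ) : Prop :=
  (∑ i, p i = ∑ j, q j) ∧ ∀ k : ℕ, topSum q k ≤ topSum p k

/-- The size of the support, `‖p‖₀`. -/
def supp0 {ι : Type*} [Fintype ι] (p : ι → ℝ) : ℕ :=
  (Finset.univ.filter fun i => p i ≠ 0).card

/-- Entrywise nonnegativity. -/
def NonnegVec {n : ℕ} (p : Fin n → ℝ) : Prop := ∀ i, 0 ≤ p i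

/-- The modified majorization preorder `≽₀,₁`: majorization plus equality of
support sizes. -/
def MajMod {ι κ : Type*} [Fintype ι] [Fintype κ] (p : ι → ℝ) (q : κ → ℝ) : Prop :=
  Majorizes p q ∧ supp0 p = supp0 q

/-- `f_α(p) = ∑_{i ∈ supp p} (p i)^α`. -/
def fA {ι : Type*} [Fintype ι] (α : ℝ) (p : ι → ℝ) : ℝ :=
  ∑ i, if p i = 0 then 0 else p i ^ α

/-- Shannon entropy (the terms with `p i = 0` vanish). -/
def H1ent {ι : Type*} [Fintype ι] (p : ι → ℝ) : ℝ := -∑ i, p i * Real.log (p i)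

/-- `H₀'(p) = ∑_{i ∈ supp p} log p_i`. -/
def H0' {ι : Type*} [Fintype ι] (p : ι → ℝ) : ℝ :=
  ∑ i, if p i = 0 then 0 else Real.log (p i)

/-- Rényi entropy of order `α` (with `α = 1` the Shannon entropy). -/
def Hent {ι : Type*} [Fintype ι] (α : ℝ) (p : ι → ℝ) : ℝ :=
  if α = 1 then -∑ i, p i * Real.log (p i)
  else (1 / (1 - α)) * Real.log (∑ i, if p i = 0 then 0 else p i ^ α)

/-- Min-entropy `H_∞(p) = - log max_i p_i`. -/
def HentInf {ι : Type*} [Fintype ι] (p : ι → ℝ) : ℝ := -Real.log (⨆ i, p i)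

/-- Kullback–Leibler divergence (the terms with `p i = 0` vanish). -/
def KL {n : ℕ} (p q : Fin n → ℝ) : ℝ :=
  ∑ i, p i * Real.log (p i / q i)

/-- Rényi divergence of order `α` for vectors with common support. -/
def Renyi {n : ℕ} (α : ℝ) (p q : Fin n → ℝ) : ℝ :=
  if α = 1 then ∑ i, p i * Real.log (p i / q i)
  else (1 / (α - 1)) * Real.log (∑ i, if p i = 0 then 0 else p i ^ α * q i ^ (1 - α))

/-- Max-divergence `D_∞(p‖q) = max_{i ∈ supp q} log (p_i / q_i)`. -/
def RenyiInf {n : ℕ} (p q : Fin n → ℝ) : ℝ :=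
  ⨆ i ∈ Finset.univ.filter (fun i => q i ≠ 0), Real.log (p i / q i)

/-- Rényi divergence with values in the extended reals `[0, ∞]`. -/
def RenyiE {n : ℕ} (α : ℝ) (p q : Fin n → ℝ) : EReal :=
  if α = 1 then
    (if ∀ i, p i ≠ 0 → q i ≠ 0 then ((∑ i, p i * Real.log (p i / q i) : ℝ) : EReal) else ⊤)
  else if α < 1 then
    (if ∃ i, p i ≠ 0 ∧ q i ≠ 0 then
      (((1 / (α - 1)) *
        Real.log (∑ i, if p i = 0 ∨ q i = 0 then 0 else p i ^ α * q i ^ (1 - α)) : ℝ) : EReal)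
    else (⊤ : EReal))
  else
    (if ∀ i, p i ≠ 0 → q i ≠ 0 then
      (((1 / (α - 1)) *
        Real.log (∑ i, if p i = 0 then 0 else p i ^ α * q i ^ (1 - α)) : ℝ) : EReal)
    else (⊤ : EReal))

/-- The common support of a tuple of vectors. -/
def suppIdx {d n : ℕ} (P : Fin d → Fin n → ℝ) : Finset (Fin n) :=
  Finset.univ.filter fun i => ∃ k, P k i ≠ 0

/-- `f_α(P) = ∑_{i ∈ I} ∏_k (p_i^{(k)})^{α_k}` with `I` the common support. -/
def fMat {d n : ℕ} (α : Fin d → ℝ) (P : Fin d → Fin n → ℝ) : ℝ :=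
  ∑ i ∈ suppIdx P, ∏ k, P k i ^ α k

/-- The matrix `α`-divergence `D_α`. -/
def Dmat {d n : ℕ} (α : Fin d → ℝ) (P : Fin d → Fin n → ℝ) : ℝ :=
  (1 / ((⨆ k, α k) - 1)) * Real.log (∑ i ∈ suppIdx P, ∏ k, P k i ^ α k)

/-- The tropical matrix divergence `D^𝕋_β`. -/
def DmatT {d n : ℕ} (β : Fin d → ℝ) (P : Fin d → Fin n → ℝ) : ℝ :=
  (1 / (⨆ k, β k)) * Real.log (⨆ i ∈ suppIdx P, ∏ k, P k i ^ β k)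

/-- Membership in `A₊`: entries summing to `1`, all nonnegative. -/
def memAplus {d : ℕ} (α : Fin d → ℝ) : Prop := (∑ k, α k = 1) ∧ ∀ k, 0 ≤ α k

/-- Membership in `A₋`: entries summing to `1`, one entry `≥ 1`, the others `≤ 0`. -/
def memAminus {d : ℕ} (α : Fin d → ℝ) : Prop :=
  (∑ k, α k = 1) ∧ ∃ k, 1 ≤ α k ∧ ∀ l, l ≠ k → α l ≤ 0

/-- Membership in `B₋`: entries summing to `0`, one entry `≥ 0`, the others `≤ 0`. -/
def memBminus {d : ℕ} (β : Fin d → ℝ) : Prop :=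
  (∑ k, β k = 0) ∧ ∃ k, 0 ≤ β k ∧ ∀ l, l ≠ k → β l ≤ 0

/-- `α` is none of the standard basis vectors `e₁, …, e_d`. -/
def notBasis {d : ℕ} (α : Fin d → ℝ) : Prop := ∀ k, α ≠ Pi.single k 1

/-- ℓ¹-distance of two vectors, padding with zeros to a common length. -/
def l1PadDist {m n : ℕ} (p : Fin m → ℝ) (q : Fin n → ℝ) : ℝ :=
  ∑ i : Fin (max m n),
    |(if h : (i : ℕ) < m then p ⟨(i : ℕ), h⟩ else 0) -
      (if h : (i : ℕ) < n then q ⟨(i : ℕ), h⟩ else 0)|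

/-- Index type of the direct sum `⨁_{s=0}^{n-1} p^{⊗(n-1-s)} ⊗ q^{⊗s}`. -/
abbrev TrickIdx (m m' n : ℕ) : Type :=
  Σ s : Fin n, (Fin (n - 1 - (s : ℕ)) → Fin m) × (Fin (s : ℕ) → Fin m')

/-- The standard catalyst `(1/n) ⨁_{s=0}^{n-1} p^{⊗(n-1-s)} ⊗ q^{⊗s}`. -/
def trick {m m' : ℕ} (p : Fin m → ℝ) (q : Fin m' → ℝ) (n : ℕ) : TrickIdx m m' n → ℝ :=
  fun x => (1 / (n : ℝ)) * (kpow p (n - 1 - (x.1 : ℕ)) x.2.1 * kpow q (x.1 : ℕ) x.2.2)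

/-- A valid tuple: nonnegative entries and common support across the tuple. -/
def TupOK {d n : ℕ} (P : Fin d → Fin n → ℝ) : Prop :=
  (∀ k i, 0 ≤ P k i) ∧ ∀ k l i, P k i ≠ 0 ↔ P l i ≠ 0

/-- Matrix majorization of tuples: a single stochastic matrix carrying each column
of `P` to the corresponding column of `Q`. -/
def TupMaj {d m n : ℕ} (P : Fin d → Fin m → ℝ) (Q : Fin d → Fin n → ℝ) : Prop :=
  ∃ T : Fin n → Fin m → ℝ, IsStochastic T ∧ ∀ k, matVec T (P k) = Q k

/-!
Majorization compares the excesses `∑ i, (p i - t)⁺` at all levels `t > 0`, or equivalently the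
truncated sums `∑ i, min (p i) t`, since the two add up to `1`. For tensor powers take
`t = exp (-n * τ)`. Chernoff's method bounds the excess above by
`exp (n * (α - 1) * (τ - H_α))` for `α ≥ 1`, and the truncated sum by
`exp (n * (1 - α) * (H_α - τ))` for `α ∈ [0, 1]`. The law of large numbers for the tilted vector
`p i ^ α / ∑ j, p j ^ α` shows that these exponents are attained when `τ` is the tilted mean of
`-log p`. Fix `s` with `H₁(p) < s < H₁(q)`; then `H_α(p) < H_α(q)` yields the comparison of excesses
for `τ ≤ s` and of truncated sums for `τ ≥ s`, first locally uniformly in `τ` and then everywhere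
by compactness: for `τ ≤ H_∞(q)` the excess of `q` vanishes, and for large `τ` only
`H₀(p) < H₀(q)` matters.

Conversely, `∑ i, p i ^ α` is, up to a positive constant, the integral of `t ^ (α - 2)` against the
excesses (`α > 1`) or against the truncated sums (`0 < α < 1`), so the power sums inherit the
inequalities of majorization; the remaining orders `0`, `1`, `∞` follow by continuity and from the
vanishing of the excess at the largest entry.
-/

open Filter Topology MeasureTheory
open Real (exp log)

section Excess

variable {ι κ : Type*} [Fintype ι] [Fintype κ] {p : ι → ℝ} {q : κ → ℝ} {s t : ℝ}

/-- The total excess `∑ i, (p i - t)⁺` of a vector over the level `t`. It is dual to the partial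
sums of the largest entries, `topSum p k = min_{t ≥ 0} (k * t + excess p t)` for `p ≥ 0`, so that
comparing excesses at all levels amounts to majorization. -/
def excess (p : ι → ℝ) (t : ℝ) : ℝ := ∑ i, max (p i - t) 0

/-- The total mass `∑ i, min (p i) t` of a vector truncated at the level `t`. It complements the
excess, and replaces it at levels where almost all of the mass is in excess. -/
def truncSum (p : ι → ℝ) (t : ℝ) : ℝ := ∑ i, min (p i) t

theorem excess_eq_sum_sub_truncSum (p : ι → ℝ) (t : ℝ) :
    excess p t = ∑ i, p i - truncSum p t := by
  rw [excess, truncSum, ← Finset.sum_sub_distrib]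
  refine Finset.sum_congr rfl fun i _ => ?_
  rw [← max_sub_sub_left, sub_self, max_comm]

theorem excess_nonneg (p : ι → ℝ) (t : ℝ) : 0 ≤ excess p t :=
  Finset.sum_nonneg fun _ _ => le_max_right _ _

theorem excess_antitone (p : ι → ℝ) : Antitone (excess p) := fun _ _ hst =>
  Finset.sum_le_sum fun i _ => max_le_max (by linarith) le_rfl

theorem truncSum_mono (p : ι → ℝ) : Monotone (truncSum p) := fun _ _ hst =>
  Finset.sum_le_sum fun _ _ => min_le_min le_rfl hst

theorem excess_eq_zero_iff : excess p t = 0 ↔ ∀ i, p i ≤ t := by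
  rw [excess, Finset.sum_eq_zero_iff_of_nonneg fun _ _ => le_max_right _ _]
  simp

theorem mul_truncSum_le_truncSum_mul {c : ℝ} (hp : ∀ i, 0 ≤ p i) (hc : 0 ≤ c) (hc1 : c ≤ 1) :
    c * truncSum p t ≤ truncSum p (c * t) := by
  rw [truncSum, Finset.mul_sum]
  refine Finset.sum_le_sum fun i _ => ?_
  rw [mul_min_of_nonneg _ _ hc]
  exact min_le_min (mul_le_of_le_one_left (hp i) hc1) le_rfl

theorem sum_le_topSum {k : ℕ} {s : Finset ι} (hs : s.card ≤ k) : ∑ i ∈ s, p i ≤ topSum p k :=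
  (ciSup_pos (f := fun _ : s.card ≤ k => ∑ i ∈ s, p i) hs).ge.trans
    (le_ciSup (f := fun s : Finset ι => ⨆ _ : s.card ≤ k, ∑ i ∈ s, p i)
      (Set.finite_range _).bddAbove s)

theorem sum_le_card_mul_add_excess (s : Finset ι) (t : ℝ) :
    ∑ i ∈ s, p i ≤ s.card * t + excess p t :=
  calc ∑ i ∈ s, p i ≤ ∑ i ∈ s, (t + max (p i - t) 0) :=
        Finset.sum_le_sum fun i _ => by linarith [le_max_left (p i - t) 0]
    _ = s.card * t + ∑ i ∈ s, max (p i - t) 0 := by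
        rw [Finset.sum_add_distrib, Finset.sum_const, nsmul_eq_mul]
    _ ≤ s.card * t + excess p t := by
        gcongr
        exact Finset.sum_le_univ_sum_of_nonneg fun _ => le_max_right _ _

theorem topSum_le_mul_add_excess (p : ι → ℝ) (k : ℕ) (ht : 0 ≤ t) :
    topSum p k ≤ k * t + excess p t := by
  refine ciSup_le fun s => Real.iSup_le (fun hs => ?_) (by have := excess_nonneg p t; positivity)
  have hs : s.card ≤ k := hs
  refine (sum_le_card_mul_add_excess s t).trans ?_
  gcongr

theorem exists_finset_card_eq_forall_le (p : ι → ℝ) {k : ℕ} (hk : k ≤ Fintype.card ι) :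
    ∃ s : Finset ι, s.card = k ∧ ∀ i ∈ s, ∀ j ∉ s, p j ≤ p i := by
  classical
  induction k with
  | zero => exact ⟨∅, by simp⟩
  | succ k ih =>
    obtain ⟨s, hs, hle⟩ := ih (by omega)
    have hsc : sᶜ.Nonempty := by rw [← Finset.card_pos, Finset.card_compl]; omega
    obtain ⟨m, hm, hmax⟩ := sᶜ.exists_max_image p hsc
    rw [Finset.mem_compl] at hm
    refine ⟨insert m s, by rw [Finset.card_insert_of_notMem hm, hs], fun i hi j hj => ?_⟩
    rw [Finset.mem_insert, not_or] at hj
    rcases Finset.mem_insert.1 hi with rfl | hi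
    · exact hmax j (Finset.mem_compl.2 hj.2)
    · exact hle i hi j hj.2

theorem sum_eq_card_mul_add_excess {s : Finset ι} (hs : ∀ i ∈ s, t ≤ p i)
    (hsc : ∀ i ∉ s, p i ≤ t) : ∑ i ∈ s, p i = s.card * t + excess p t := by
  have hexcess : excess p t = ∑ i ∈ s, (p i - t) := by
    rw [excess, ← Finset.sum_subset s.subset_univ fun i _ hi =>
      max_eq_right (by linarith [hsc i hi])]
    exact Finset.sum_congr rfl fun i hi => max_eq_left (by linarith [hs i hi])
  rw [hexcess, Finset.sum_sub_distrib, Finset.sum_const, nsmul_eq_mul]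
  ring

theorem exists_mul_add_excess_le_topSum (hp : ∀ i, 0 ≤ p i) (k : ℕ) :
    ∃ t, 0 ≤ t ∧ k * t + excess p t ≤ topSum p k := by
  classical
  rcases lt_or_ge k (Fintype.card ι) with hk | hk
  · obtain ⟨s, rfl, hle⟩ := exists_finset_card_eq_forall_le p hk.le
    have hsc : sᶜ.Nonempty := by rw [← Finset.card_pos, Finset.card_compl]; omega
    obtain ⟨m, hm, hmax⟩ := sᶜ.exists_max_image p hsc
    refine ⟨p m, hp m, (sum_eq_card_mul_add_excess (fun i hi => ?_) fun i hi => ?_).ge.trans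
      (sum_le_topSum le_rfl)⟩
    · exact hle i hi m (Finset.mem_compl.1 hm)
    · exact hmax i (Finset.mem_compl.2 hi)
  · refine ⟨0, le_rfl, le_trans ?_ (sum_le_topSum (s := Finset.univ) hk)⟩
    rw [mul_zero, zero_add, sum_eq_card_mul_add_excess (t := 0) (fun i _ => hp i) (by simp)]
    simp

theorem majorizes_of_forall_excess_le (hp : ∀ i, 0 ≤ p i) (hq : ∀ j, 0 ≤ q j)
    (hsum : ∑ i, p i = ∑ j, q j) (h : ∀ t, 0 < t → excess q t ≤ excess p t) : Majorizes p q := by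
  refine ⟨hsum, fun k => ?_⟩
  obtain ⟨t, ht, hle⟩ := exists_mul_add_excess_le_topSum hp k
  refine (topSum_le_mul_add_excess q k ht).trans (le_trans ?_ hle)
  gcongr
  rcases ht.eq_or_lt with rfl | ht
  · simp [excess, hp, hq, hsum]
  · exact h t ht

theorem Majorizes.excess_le (h : Majorizes p q) (ht : 0 ≤ t) : excess q t ≤ excess p t := by
  let s : Finset κ := {j | t < q j}
  have hsum : ∑ j ∈ s, q j = s.card * t + excess q t :=
    sum_eq_card_mul_add_excess (fun j hj => by simpa using (Finset.mem_filter.1 hj).2.le)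
      (by simp [s])
  linarith [sum_le_topSum (p := q) (le_refl s.card), h.2 s.card,
    topSum_le_mul_add_excess p s.card ht]

theorem Majorizes.truncSum_le (h : Majorizes p q) (ht : 0 ≤ t) : truncSum p t ≤ truncSum q t := by
  linarith [h.excess_le ht, h.1, excess_eq_sum_sub_truncSum p t, excess_eq_sum_sub_truncSum q t]

end Excess

section PowerSums

variable {ι : Type*} {p : ι → ℝ} {x α : ℝ}

/-- The power `x ^ α` with the convention `0 ^ α = 0` for every `α`, including `α = 0`: the summand
of the power sum `fA α`. -/
def rpowSupp (x α : ℝ) : ℝ := if x = 0 then 0 else x ^ α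

theorem rpowSupp_zero_left (α : ℝ) : rpowSupp 0 α = 0 := if_pos rfl

theorem rpowSupp_of_pos (hx : 0 < x) (α : ℝ) : rpowSupp x α = x ^ α := if_neg hx.ne'

theorem rpowSupp_one_right (x : ℝ) : rpowSupp x 1 = x := by
  unfold rpowSupp
  split_ifs with h
  · exact h.symm
  · exact Real.rpow_one x

theorem rpowSupp_nonneg (hx : 0 ≤ x) (α : ℝ) : 0 ≤ rpowSupp x α := by
  unfold rpowSupp
  split_ifs <;> positivity

theorem rpowSupp_prod {κ : Type*} {s : Finset κ} {x : κ → ℝ} (hx : ∀ j ∈ s, 0 ≤ x j) (α : ℝ) :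
    rpowSupp (∏ j ∈ s, x j) α = ∏ j ∈ s, rpowSupp (x j) α := by
  by_cases h : ∃ j ∈ s, x j = 0
  · obtain ⟨j, hj, hxj⟩ := h
    rw [Finset.prod_eq_zero hj hxj, rpowSupp_zero_left,
      Finset.prod_eq_zero hj (by rw [hxj, rpowSupp_zero_left])]
  · push Not at h
    have hpos : ∀ j ∈ s, 0 < x j := fun j hj => (hx j hj).lt_of_ne' (h j hj)
    rw [rpowSupp_of_pos (Finset.prod_pos hpos), ← Real.finsetProd_rpow s x hx]
    exact Finset.prod_congr rfl fun j hj => (rpowSupp_of_pos (hpos j hj) α).symm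

theorem hasDerivAt_rpowSupp (hx : 0 ≤ x) (α : ℝ) :
    HasDerivAt (rpowSupp x) (rpowSupp x α * log x) α := by
  rcases hx.eq_or_lt with rfl | hx
  · rw [funext rpowSupp_zero_left, zero_mul]
    exact hasDerivAt_const α 0
  · rw [rpowSupp_of_pos hx, funext (rpowSupp_of_pos hx)]
    exact (Real.hasStrictDerivAt_const_rpow hx α).hasDerivAt

theorem kpow_nonneg (hp : ∀ i, 0 ≤ p i) (n : ℕ) (f : Fin n → ι) : 0 ≤ kpow p n f :=
  Finset.prod_nonneg fun _ _ => hp _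

variable [Fintype ι]

theorem sum_kpow (p : ι → ℝ) (n : ℕ) : ∑ f, kpow p n f = (∑ i, p i) ^ n :=
  (Fintype.sum_pow p n).symm

theorem isProbVec_kpow (hp : IsProbVec p) (n : ℕ) : IsProbVec (kpow p n) :=
  ⟨kpow_nonneg hp.1 n, by rw [sum_kpow, hp.2, one_pow]⟩

theorem IsProbVec.exists_pos (hp : IsProbVec p) : ∃ i, 0 < p i := by
  obtain ⟨i, -, hi⟩ := Finset.exists_lt_of_sum_lt (s := Finset.univ) (f := fun _ => (0 : ℝ))
    (g := p) (by simp [hp.2])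
  exact ⟨i, hi⟩

theorem fA_eq_sum_rpowSupp (α : ℝ) (p : ι → ℝ) : fA α p = ∑ i, rpowSupp (p i) α := rfl

theorem fA_pos (hp : IsProbVec p) (α : ℝ) : 0 < fA α p := by
  obtain ⟨i, hi⟩ := hp.exists_pos
  refine Finset.sum_pos' (fun i _ => rpowSupp_nonneg (hp.1 i) α) ⟨i, Finset.mem_univ i, ?_⟩
  exact (Real.rpow_pos_of_pos hi α).trans_eq (rpowSupp_of_pos hi α).symm

theorem fA_one (p : ι → ℝ) : fA 1 p = ∑ i, p i := by
  simp only [fA_eq_sum_rpowSupp, rpowSupp_one_right]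

theorem rpowSupp_le_fA (hp : ∀ i, 0 ≤ p i) (i : ι) (α : ℝ) : rpowSupp (p i) α ≤ fA α p :=
  Finset.single_le_sum (f := fun i => rpowSupp (p i) α) (fun i _ => rpowSupp_nonneg (hp i) α)
    (Finset.mem_univ i)

theorem fA_kpow (hp : ∀ i, 0 ≤ p i) (α : ℝ) (n : ℕ) : fA α (kpow p n) = fA α p ^ n := by
  rw [fA_eq_sum_rpowSupp α p, ← sum_kpow]
  exact Finset.sum_congr rfl fun f _ => rpowSupp_prod (fun j _ => hp (f j)) α

theorem hasDerivAt_fA (hp : ∀ i, 0 ≤ p i) (α : ℝ) :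
    HasDerivAt (fA · p) (∑ i, rpowSupp (p i) α * log (p i)) α := by
  simp only [fA_eq_sum_rpowSupp]
  exact HasDerivAt.fun_sum fun i _ => hasDerivAt_rpowSupp (hp i) α

end PowerSums

section Tilting

variable {ι : Type*} [Fintype ι] {p : ι → ℝ}

/-- The tilted (escort) vector of `p` of order `α`, with weights proportional to `p i ^ α` on the
support of `p`; it is the change of measure behind the lower bounds on excesses. -/
def tilt (α : ℝ) (p : ι → ℝ) (i : ι) : ℝ := rpowSupp (p i) α / fA α p

/-- The mean of `-log p` under the tilted vector of order `α`: the exponential rate `τ` at which the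
entries of size `exp (-n * τ)` dominate the power sum of order `α` of the `n`-th tensor power. -/
def tiltMean (p : ι → ℝ) (α : ℝ) : ℝ := ∑ i, tilt α p i * -log (p i)

theorem isProbVec_tilt (hp : IsProbVec p) (α : ℝ) : IsProbVec (tilt α p) := by
  refine ⟨fun i => div_nonneg (rpowSupp_nonneg (hp.1 i) α) (fA_pos hp α).le, ?_⟩
  simp only [tilt]
  rw [← Finset.sum_div, ← fA_eq_sum_rpowSupp, div_self (fA_pos hp α).ne']

theorem tilt_kpow (hp : ∀ i, 0 ≤ p i) (α : ℝ) (n : ℕ) :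
    tilt α (kpow p n) = kpow (tilt α p) n := by
  ext f
  simp only [tilt, kpow, Finset.prod_div_distrib, Finset.prod_const, Finset.card_univ,
    Fintype.card_fin, rpowSupp_prod fun j _ => hp (f j)]
  rw [← fA_kpow hp]

theorem tilt_one (hp : IsProbVec p) : tilt 1 p = p := by
  ext i
  rw [tilt, rpowSupp_one_right, fA_one, hp.2, div_one]

theorem hasDerivAt_log_fA (hp : IsProbVec p) (α : ℝ) :
    HasDerivAt (fun β => log (fA β p)) (-tiltMean p α) α := by
  convert (hasDerivAt_fA hp.1 α).log (fA_pos hp α).ne' using 1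
  simp only [tiltMean, tilt, mul_neg, Finset.sum_neg_distrib, neg_neg, div_mul_eq_mul_div,
    Finset.sum_div]

theorem continuous_tiltMean (hp : IsProbVec p) : Continuous (tiltMean p) := by
  have hfA : Continuous (fA · p) :=
    continuous_iff_continuousAt.2 fun α => (hasDerivAt_fA hp.1 α).continuousAt
  have hrpow (i : ι) : Continuous (rpowSupp (p i)) :=
    continuous_iff_continuousAt.2 fun α => (hasDerivAt_rpowSupp (hp.1 i) α).continuousAt
  exact continuous_finsetSum _ fun i _ =>
    ((hrpow i).div hfA fun α => (fA_pos hp α).ne').mul continuous_const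

end Tilting

section Entropy

variable {ι : Type*} [Fintype ι] {p : ι → ℝ}

theorem Hent_of_ne_one {α : ℝ} (hα : α ≠ 1) (p : ι → ℝ) :
    Hent α p = 1 / (1 - α) * log (fA α p) := if_neg hα

theorem fA_eq_exp (hp : IsProbVec p) (α : ℝ) : fA α p = exp ((1 - α) * Hent α p) := by
  rcases eq_or_ne α 1 with rfl | hα
  · rw [fA_one, hp.2, sub_self, zero_mul, Real.exp_zero]
  · rw [Hent_of_ne_one hα, ← mul_assoc, mul_one_div_cancel (sub_ne_zero.2 hα.symm), one_mul,
      Real.exp_log (fA_pos hp α)]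

theorem tiltMean_one (hp : IsProbVec p) : tiltMean p 1 = Hent 1 p := by
  rw [tiltMean, tilt_one hp, Hent, if_pos rfl]
  simp only [mul_neg, Finset.sum_neg_distrib]

theorem Hent_eq_neg_dslope (hp : IsProbVec p) (α : ℝ) :
    Hent α p = -dslope (fun β => log (fA β p)) 1 α := by
  rcases eq_or_ne α 1 with rfl | hα
  · rw [dslope_same, (hasDerivAt_log_fA hp 1).deriv, tiltMean_one hp, neg_neg]
  · rw [dslope_of_ne _ hα, slope_def_field, fA_one, hp.2, Real.log_one, sub_zero,
      Hent_of_ne_one hα, ← neg_sub α 1, div_neg, neg_mul, one_div_mul_eq_div]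

theorem continuous_Hent (hp : IsProbVec p) : Continuous (Hent · p) := by
  simp only [Hent_eq_neg_dslope hp, ← continuousOn_univ]
  refine ((continuousOn_dslope univ_mem).2 ⟨fun α _ => ?_, ?_⟩).neg
  · exact (hasDerivAt_log_fA hp α).continuousAt.continuousWithinAt
  · exact (hasDerivAt_log_fA hp 1).differentiableAt

theorem Hent_kpow (hp : IsProbVec p) (α : ℝ) (n : ℕ) : Hent α (kpow p n) = n * Hent α p := by
  simp only [Hent_eq_neg_dslope hp, Hent_eq_neg_dslope (isProbVec_kpow hp n), fA_kpow hp.1,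
    Real.log_pow, ← smul_eq_mul (n : ℝ)]
  rw [smul_neg]
  exact congrArg _ <| ContinuousLinearMap.dslope_comp ((n : ℝ) • ContinuousLinearMap.id ℝ ℝ) _ 1 α
    fun _ => (hasDerivAt_log_fA hp 1).differentiableAt

theorem fA_kpow_eq_exp (hp : IsProbVec p) (α : ℝ) (n : ℕ) :
    fA α (kpow p n) = exp (n * ((1 - α) * Hent α p)) := by
  rw [fA_kpow hp.1, fA_eq_exp hp, Real.exp_nat_mul]

theorem exp_neg_HentInf (hp : IsProbVec p) : exp (-HentInf p) = ⨆ i, p i := by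
  obtain ⟨i, hi⟩ := hp.exists_pos
  rw [HentInf, neg_neg, Real.exp_log (hi.trans_le (le_ciSup (Set.finite_range p).bddAbove i))]

theorem le_exp_neg_HentInf (hp : IsProbVec p) (i : ι) : p i ≤ exp (-HentInf p) :=
  (le_ciSup (Set.finite_range p).bddAbove i).trans_eq (exp_neg_HentInf hp).symm

theorem exists_eq_exp_neg_HentInf (hp : IsProbVec p) : ∃ i, p i = exp (-HentInf p) := by
  obtain ⟨i, -⟩ := hp.exists_pos
  have : Nonempty ι := ⟨i⟩
  rw [exp_neg_HentInf hp]
  exact exists_eq_ciSup_of_finite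

theorem le_HentInf_iff (hp : IsProbVec p) {h : ℝ} : h ≤ HentInf p ↔ ∀ i, p i ≤ exp (-h) := by
  refine ⟨fun hh i => (le_exp_neg_HentInf hp i).trans (by gcongr), fun hle => ?_⟩
  obtain ⟨i, hi⟩ := exists_eq_exp_neg_HentInf hp
  simpa [hi] using hle i

theorem HentInf_nonneg (hp : IsProbVec p) : 0 ≤ HentInf p := by
  rw [le_HentInf_iff hp, neg_zero, Real.exp_zero, ← hp.2]
  exact fun i => Finset.single_le_sum (fun i _ => hp.1 i) (Finset.mem_univ i)

theorem HentInf_kpow (hp : IsProbVec p) (n : ℕ) : HentInf (kpow p n) = n * HentInf p := by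
  apply le_antisymm
  · obtain ⟨i, hi⟩ := exists_eq_exp_neg_HentInf hp
    have := (le_HentInf_iff (isProbVec_kpow hp n)).1 le_rfl fun _ => i
    simpa [kpow, hi, ← Real.exp_nat_mul] using this
  · rw [le_HentInf_iff (isProbVec_kpow hp n), ← mul_neg, Real.exp_nat_mul]
    exact fun f => (Finset.prod_le_prod (fun j _ => hp.1 _) fun j _ =>
      le_exp_neg_HentInf hp (f j)).trans_eq (by simp)

theorem sub_one_mul_Hent_le (hp : IsProbVec p) (A : ℝ) : (A - 1) * Hent A p ≤ A * HentInf p := by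
  obtain ⟨i, hi⟩ := exists_eq_exp_neg_HentInf hp
  have := rpowSupp_le_fA hp.1 i A
  rw [hi, rpowSupp_of_pos (Real.exp_pos _), ← Real.exp_mul, fA_eq_exp hp, Real.exp_le_exp] at this
  linarith

theorem exists_one_lt_Hent_lt (hp : IsProbVec p) {τ : ℝ} (hτ : HentInf p < τ) :
    ∃ A, 1 < A ∧ Hent A p < τ := by
  have hτ0 : 0 < τ := (HentInf_nonneg hp).trans_lt hτ
  have hgap : 0 < τ - HentInf p := sub_pos.2 hτ
  let A := τ / (τ - HentInf p) + 1
  have hA : 0 < A - 1 := by simp only [A, add_sub_cancel_right]; positivity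
  have hAgap : (A - 1) * (τ - HentInf p) = τ := by
    rw [add_sub_cancel_right, div_mul_cancel₀ _ hgap.ne']
  refine ⟨A, sub_pos.1 hA, lt_of_mul_lt_mul_left ?_ hA.le⟩
  linarith [sub_one_mul_Hent_le hp A]

theorem exists_tiltMean_eq_Hent (hp : IsProbVec p) {A : ℝ} (hA : 1 < A) :
    ∃ α ∈ Set.Ioo 1 A, tiltMean p α = Hent A p := by
  obtain ⟨α, hα, hslope⟩ := exists_hasDerivAt_eq_slope (fun β => log (fA β p)) _ hA
    (fun β _ => (hasDerivAt_log_fA hp β).continuousAt.continuousWithinAt)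
    fun β _ => hasDerivAt_log_fA hp β
  refine ⟨α, hα, ?_⟩
  rw [Hent_eq_neg_dslope hp, dslope_of_ne _ hA.ne', slope_def_field, ← hslope, neg_neg]

theorem exists_one_lt_tiltMean_lt (hp : IsProbVec p) {τ : ℝ} (hτ : HentInf p < τ) :
    ∃ α, 1 < α ∧ tiltMean p α < τ := by
  obtain ⟨A, hA, hHent⟩ := exists_one_lt_Hent_lt hp hτ
  obtain ⟨α, hα, hmean⟩ := exists_tiltMean_eq_Hent hp hA
  exact ⟨α, hα.1, hmean ▸ hHent⟩

end Entropy

section LawOfLargeNumbers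

variable {ι : Type*} [Fintype ι] {w : ι → ℝ}

theorem sum_kpow_succ_mul (w : ι → ℝ) (n : ℕ) (F : (Fin (n + 1) → ι) → ℝ) :
    ∑ f, kpow w (n + 1) f * F f = ∑ i, w i * ∑ f, kpow w n f * F (Fin.cons i f) := by
  rw [← (Fin.consEquiv fun _ => ι).sum_comp, Fintype.sum_prod_type]
  simp only [Finset.mul_sum, kpow, Fin.prod_univ_succ, ← mul_assoc]
  rfl

theorem sum_kpow_mul_sum_eq_zero (hw : ∑ i, w i = 1) {b : ι → ℝ} (hb : ∑ i, w i * b i = 0)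
    (n : ℕ) : ∑ f, kpow w n f * ∑ j, b (f j) = 0 := by
  induction n with
  | zero => simp
  | succ n ih =>
    simp only [sum_kpow_succ_mul, Fin.sum_univ_succ, Fin.cons_zero, Fin.cons_succ, mul_add,
      Finset.sum_add_distrib, ih, ← Finset.sum_mul, sum_kpow, hw, one_pow, one_mul, mul_zero, hb,
      Finset.sum_const_zero, add_zero]

theorem sum_kpow_mul_sum_sq (hw : ∑ i, w i = 1) {b : ι → ℝ} (hb : ∑ i, w i * b i = 0) (n : ℕ) :
    ∑ f, kpow w n f * (∑ j, b (f j)) ^ 2 = n * ∑ i, w i * b i ^ 2 := by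
  induction n with
  | zero => simp
  | succ n ih =>
    have hcons (i : ι) :
        ∑ f, kpow w n f * (b i + ∑ j, b (f j)) ^ 2 = b i ^ 2 + n * ∑ i, w i * b i ^ 2 :=
      calc ∑ f, kpow w n f * (b i + ∑ j, b (f j)) ^ 2
          = ∑ f, (kpow w n f * b i ^ 2 + 2 * b i * (kpow w n f * ∑ j, b (f j)) +
              kpow w n f * (∑ j, b (f j)) ^ 2) := Finset.sum_congr rfl fun f _ => by ring
        _ = b i ^ 2 + n * ∑ i, w i * b i ^ 2 := by
            rw [Finset.sum_add_distrib, Finset.sum_add_distrib, ← Finset.sum_mul,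
              ← Finset.mul_sum, ih, sum_kpow, hw, sum_kpow_mul_sum_eq_zero hw hb]
            ring
    simp only [sum_kpow_succ_mul, Fin.sum_univ_succ, Fin.cons_zero, Fin.cons_succ, hcons, mul_add,
      Finset.sum_add_distrib, ← Finset.sum_mul, hw]
    push_cast
    ring

theorem one_sub_div_sq_le_sum_abs_le (hw : IsProbVec w) (b : ι → ℝ) {c : ℝ} (hc : 0 < c) :
    1 - (∑ i, w i * b i ^ 2) / c ^ 2 ≤ ∑ i with |b i| ≤ c, w i := by
  have htail : ∑ i with ¬|b i| ≤ c, w i ≤ (∑ i, w i * b i ^ 2) / c ^ 2 := by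
    rw [le_div_iff₀ (by positivity), Finset.sum_mul]
    refine (Finset.sum_le_sum fun i hi => ?_).trans
      (Finset.sum_le_univ_sum_of_nonneg fun i => mul_nonneg (hw.1 i) (sq_nonneg (b i)))
    have hlt : c < |b i| := not_le.1 (Finset.mem_filter.1 hi).2
    exact mul_le_mul_of_nonneg_left (sq_le_sq.2 (by rw [abs_of_pos hc]; exact hlt.le)) (hw.1 i)
  have hsum := Finset.sum_filter_add_sum_filter_not Finset.univ (|b ·| ≤ c) w
  linarith [hw.2]

theorem tendsto_sum_kpow_abs_sub_le (hw : IsProbVec w) (a : ι → ℝ) {ε : ℝ} (hε : 0 < ε) :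
    Tendsto (fun n : ℕ => ∑ f with |∑ j, a (f j) - n * ∑ i, w i * a i| ≤ n * ε, kpow w n f)
      atTop (𝓝 1) := by
  set b : ι → ℝ := fun i => a i - ∑ i, w i * a i with hb_def
  have hb : ∑ i, w i * b i = 0 := by
    simp only [hb_def, mul_sub, Finset.sum_sub_distrib, ← Finset.sum_mul, hw.2, one_mul, sub_self]
  have hsum (n : ℕ) (f : Fin n → ι) : ∑ j, b (f j) = ∑ j, a (f j) - n * ∑ i, w i * a i := by
    simp [hb_def]
  simp only [← hsum]
  have hlim := (tendsto_const_div_atTop_nhds_zero_nat ((∑ i, w i * b i ^ 2) / ε ^ 2)).const_sub 1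
  rw [sub_zero] at hlim
  refine tendsto_of_tendsto_of_tendsto_of_le_of_le' hlim tendsto_const_nhds ?_ ?_
  · filter_upwards [eventually_gt_atTop 0] with n hn
    refine le_trans (le_of_eq ?_) (one_sub_div_sq_le_sum_abs_le (isProbVec_kpow hw n)
      (fun f => ∑ j, b (f j)) (show 0 < n * ε by positivity))
    rw [sum_kpow_mul_sum_sq hw.2 hb]
    field_simp
  · exact Eventually.of_forall fun n => (Finset.sum_le_univ_sum_of_nonneg
      (kpow_nonneg hw.1 n)).trans_eq (isProbVec_kpow hw n).2

end LawOfLargeNumbers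

section ExponentialBounds

variable {ι : Type*} {p : ι → ℝ} {x t α τ r : ℝ}

theorem eventually_exp_mul_le_mul_exp_mul {c r r' : ℝ} (hc : 0 < c) (hr : r < r') :
    ∀ᶠ n : ℕ in atTop, exp (n * r) ≤ c * exp (n * r') := by
  have hlim : Tendsto (fun n : ℕ => exp (n * (r - r'))) atTop (𝓝 0) :=
    Real.tendsto_exp_atBot.comp
      (tendsto_natCast_atTop_atTop.atTop_mul_const_of_neg (sub_neg.2 hr))
  filter_upwards [hlim.eventually_le_const hc] with n hn
  calc exp (n * r) = exp (n * (r - r')) * exp (n * r') := by rw [← Real.exp_add]; ring_nf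
    _ ≤ c * exp (n * r') := by gcongr

theorem max_sub_zero_le_rpowSupp_mul (hx : 0 ≤ x) (ht : 0 < t) (hα : 1 ≤ α) :
    max (x - t) 0 ≤ rpowSupp x α * t ^ (1 - α) := by
  have h0 : 0 ≤ rpowSupp x α * t ^ (1 - α) :=
    mul_nonneg (rpowSupp_nonneg hx α) (Real.rpow_nonneg ht.le _)
  refine max_le ?_ h0
  rcases le_or_gt x t with hxt | hxt
  · exact (sub_nonpos.2 hxt).trans h0
  · have hx' := ht.trans hxt
    calc x - t ≤ x ^ α * x ^ (1 - α) := by rw [← Real.rpow_add hx']; simp [ht.le]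
      _ ≤ x ^ α * t ^ (1 - α) := by
          gcongr x ^ α * ?_
          exact Real.rpow_le_rpow_of_nonpos ht hxt.le (sub_nonpos.2 hα)
      _ = rpowSupp x α * t ^ (1 - α) := by rw [rpowSupp_of_pos hx']

theorem min_le_rpowSupp_mul (hx : 0 ≤ x) (ht : 0 < t) (hα : α ∈ Set.Icc 0 1) :
    min x t ≤ rpowSupp x α * t ^ (1 - α) := by
  rcases hx.eq_or_lt with rfl | hx
  · rw [rpowSupp_zero_left, zero_mul, min_eq_left ht.le]
  · have hmin : 0 < min x t := lt_min hx ht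
    calc min x t = min x t ^ α * min x t ^ (1 - α) := by rw [← Real.rpow_add hmin]; simp
      _ ≤ x ^ α * t ^ (1 - α) := by
          have := hα.1
          have := sub_nonneg.2 hα.2
          gcongr
          exacts [min_le_left x t, min_le_right x t]
      _ = rpowSupp x α * t ^ (1 - α) := by rw [rpowSupp_of_pos hx]

variable [Fintype ι]

theorem excess_kpow_le (hp : IsProbVec p) (hα : 1 ≤ α) (n : ℕ) (τ : ℝ) :
    excess (kpow p n) (exp (-(n * τ))) ≤ exp (n * ((α - 1) * (τ - Hent α p))) :=
  calc excess (kpow p n) (exp (-(n * τ)))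
      ≤ ∑ f, rpowSupp (kpow p n f) α * exp (-(n * τ)) ^ (1 - α) := Finset.sum_le_sum fun f _ =>
        max_sub_zero_le_rpowSupp_mul (kpow_nonneg hp.1 n f) (Real.exp_pos _) hα
    _ = exp (n * ((α - 1) * (τ - Hent α p))) := by
        rw [← Finset.sum_mul, ← fA_eq_sum_rpowSupp, fA_kpow_eq_exp hp, ← Real.exp_mul,
          ← Real.exp_add]
        ring_nf

theorem truncSum_kpow_le (hp : IsProbVec p) (hα : α ∈ Set.Icc 0 1) (n : ℕ) (τ : ℝ) :
    truncSum (kpow p n) (exp (-(n * τ))) ≤ exp (n * ((1 - α) * (Hent α p - τ))) :=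
  calc truncSum (kpow p n) (exp (-(n * τ)))
      ≤ ∑ f, rpowSupp (kpow p n f) α * exp (-(n * τ)) ^ (1 - α) := Finset.sum_le_sum fun f _ =>
        min_le_rpowSupp_mul (kpow_nonneg hp.1 n f) (Real.exp_pos _) hα
    _ = exp (n * ((1 - α) * (Hent α p - τ))) := by
        rw [← Finset.sum_mul, ← fA_eq_sum_rpowSupp, fA_kpow_eq_exp hp, ← Real.exp_mul,
          ← Real.exp_add]
        ring_nf

open Classical in
/-- The `n`-tuples whose probability under `kpow p n` is `exp (-n * μ)`, up to a factor between
`exp (-n * ε)` and `exp (n * ε)`. -/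
def typicalSet (p : ι → ℝ) (n : ℕ) (μ ε : ℝ) : Finset (Fin n → ι) :=
  {f | 0 < kpow p n f ∧ |-log (kpow p n f) - n * μ| ≤ n * ε}

theorem mem_typicalSet {n : ℕ} {μ ε : ℝ} {f : Fin n → ι} :
    f ∈ typicalSet p n μ ε ↔ 0 < kpow p n f ∧ |-log (kpow p n f) - n * μ| ≤ n * ε := by
  simp [typicalSet]

theorem exp_le_of_mem_typicalSet {n : ℕ} {μ ε : ℝ} {f : Fin n → ι} (hf : f ∈ typicalSet p n μ ε) :
    exp (-(n * (μ + ε))) ≤ kpow p n f := by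
  obtain ⟨hpos, habs⟩ := mem_typicalSet.1 hf
  rw [← Real.le_log_iff_exp_le hpos]
  linarith [(abs_le.1 habs).2]

theorem le_exp_of_mem_typicalSet {n : ℕ} {μ ε : ℝ} {f : Fin n → ι} (hf : f ∈ typicalSet p n μ ε) :
    kpow p n f ≤ exp (-(n * (μ - ε))) := by
  obtain ⟨hpos, habs⟩ := mem_typicalSet.1 hf
  rw [← Real.log_le_iff_le_exp hpos]
  linarith [(abs_le.1 habs).1]

theorem typicalSet_mono (p : ι → ℝ) (n : ℕ) (μ : ℝ) : Monotone (typicalSet p n μ) :=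
  fun _ _ hεδ _ hf => mem_typicalSet.2 <| (mem_typicalSet.1 hf).imp_right fun h =>
    h.trans (by gcongr)

theorem tendsto_sum_typicalSet_tilt (hp : IsProbVec p) (α : ℝ) {ε : ℝ} (hε : 0 < ε) :
    Tendsto (fun n => ∑ f ∈ typicalSet p n (tiltMean p α) ε, tilt α (kpow p n) f) atTop (𝓝 1) := by
  refine (tendsto_sum_kpow_abs_sub_le (isProbVec_tilt hp α) (fun i => -log (p i)) hε).congr
    fun n => ?_
  have hlog {f : Fin n → ι} (hf : 0 < kpow p n f) :
      -log (kpow p n f) = ∑ j, -log (p (f j)) := by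
    rw [kpow, Real.log_prod (Finset.prod_ne_zero_iff.1 hf.ne'), Finset.sum_neg_distrib]
  simp only [tilt_kpow hp.1]
  refine (Finset.sum_subset (fun f hf => ?_) fun f hf hnot => ?_).symm
  · obtain ⟨hpos, habs⟩ := mem_typicalSet.1 hf
    exact Finset.mem_filter.2 ⟨Finset.mem_univ f, hlog hpos ▸ habs⟩
  · rcases (kpow_nonneg hp.1 n f).eq_or_lt with h0 | hpos
    · rw [← tilt_kpow hp.1, tilt, ← h0, rpowSupp_zero_left, zero_div]
    · refine (hnot (mem_typicalSet.2 ⟨hpos, ?_⟩)).elim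
      rw [hlog hpos]
      exact (Finset.mem_filter.1 hf).2

theorem eq_tilt_mul_exp (hp : IsProbVec p) (α : ℝ) {i : ι} (hi : 0 < p i) :
    p i = tilt α p i * exp ((1 - α) * (Hent α p + log (p i))) := by
  rw [tilt, rpowSupp_of_pos hi, mul_add, Real.exp_add, ← fA_eq_exp hp, ← mul_assoc,
    div_mul_cancel₀ _ (fA_pos hp α).ne', mul_comm (1 - α), ← Real.rpow_def_of_pos hi,
    ← Real.rpow_add hi, add_sub_cancel, Real.rpow_one]

theorem tilt_mul_exp_le_of_mem_typicalSet (hp : IsProbVec p) (α : ℝ) {n : ℕ} {μ ε : ℝ}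
    {f : Fin n → ι} (hf : f ∈ typicalSet p n μ ε) :
    tilt α (kpow p n) f * exp (n * ((1 - α) * (Hent α p - μ) - |1 - α| * ε)) ≤ kpow p n f := by
  obtain ⟨hpos, habs⟩ := mem_typicalSet.1 hf
  have hpn := isProbVec_kpow hp n
  have hprod : (1 - α) * (-log (kpow p n f) - n * μ) ≤ |1 - α| * (n * ε) :=
    (le_abs_self _).trans (by rw [abs_mul]; gcongr)
  refine le_trans ?_ (eq_tilt_mul_exp hpn α hpos).ge
  refine mul_le_mul_of_nonneg_left (Real.exp_le_exp.2 ?_) ((isProbVec_tilt hpn α).1 f)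
  rw [Hent_kpow hp]
  linarith

theorem eventually_exp_le_sum_typicalSet (hp : IsProbVec p) {δ : ℝ} (hδ : 0 < δ)
    (hr : r < (1 - α) * (Hent α p - tiltMean p α)) :
    ∀ᶠ n : ℕ in atTop, exp (n * r) ≤ ∑ f ∈ typicalSet p n (tiltMean p α) δ, kpow p n f := by
  obtain ⟨ε, hε, hεδ, hrε⟩ : ∃ ε, 0 < ε ∧ ε ≤ δ ∧
      r < (1 - α) * (Hent α p - tiltMean p α) - |1 - α| * ε := by
    have hlim : Tendsto (fun ε => (1 - α) * (Hent α p - tiltMean p α) - |1 - α| * ε) (𝓝[>] 0)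
        (𝓝 ((1 - α) * (Hent α p - tiltMean p α) - |1 - α| * 0)) :=
      tendsto_nhdsWithin_of_tendsto_nhds (by fun_prop : Continuous _).continuousAt
    rw [mul_zero, sub_zero] at hlim
    have hsmall : ∀ᶠ ε : ℝ in 𝓝[>] 0, 0 < ε ∧ ε ≤ δ := Ioc_mem_nhdsGT hδ
    obtain ⟨ε, ⟨hε, hεδ⟩, hrε⟩ := (hsmall.and (hlim.eventually_const_lt hr)).exists
    exact ⟨ε, hε, hεδ, hrε⟩
  set r' := (1 - α) * (Hent α p - tiltMean p α) - |1 - α| * ε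
  filter_upwards [eventually_exp_mul_le_mul_exp_mul (by norm_num : (0 : ℝ) < 1 / 2) hrε,
    (tendsto_sum_typicalSet_tilt hp α hε).eventually_const_le (by norm_num : (1 / 2 : ℝ) < 1)]
    with n hexp hhalf
  calc exp (n * r) ≤ 1 / 2 * exp (n * r') := hexp
    _ ≤ ∑ f ∈ typicalSet p n (tiltMean p α) ε, tilt α (kpow p n) f * exp (n * r') := by
        rw [← Finset.sum_mul]
        gcongr
    _ ≤ ∑ f ∈ typicalSet p n (tiltMean p α) ε, kpow p n f :=
        Finset.sum_le_sum fun f hf => tilt_mul_exp_le_of_mem_typicalSet hp α hf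
    _ ≤ ∑ f ∈ typicalSet p n (tiltMean p α) δ, kpow p n f :=
        Finset.sum_le_sum_of_subset_of_nonneg (typicalSet_mono p n _ hεδ)
          fun f _ _ => kpow_nonneg hp.1 n f

theorem eventually_exp_le_excess_kpow (hp : IsProbVec p) (hτ : tiltMean p α < τ)
    (hr : r < (1 - α) * (Hent α p - tiltMean p α)) :
    ∀ᶠ n : ℕ in atTop, exp (n * r) ≤ excess (kpow p n) (exp (-(n * τ))) := by
  obtain ⟨r', hrr', hr'⟩ := exists_between hr
  obtain ⟨σ, hσ, hστ⟩ := exists_between hτ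
  filter_upwards [eventually_exp_le_sum_typicalSet hp (sub_pos.2 hσ) hr',
    eventually_exp_mul_le_mul_exp_mul (by norm_num : (0 : ℝ) < 1 / 2) hrr',
    eventually_exp_mul_le_mul_exp_mul (by norm_num : (0 : ℝ) < 1 / 2) (neg_lt_neg hστ)]
    with n hsum hexp hhalf
  calc exp (n * r) ≤ 1 / 2 * exp (n * r') := hexp
    _ ≤ 1 / 2 * ∑ f ∈ typicalSet p n (tiltMean p α) (σ - tiltMean p α), kpow p n f := by gcongr
    _ ≤ ∑ f ∈ typicalSet p n (tiltMean p α) (σ - tiltMean p α),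
          max (kpow p n f - exp (-(n * τ))) 0 := by
        rw [Finset.mul_sum]
        refine Finset.sum_le_sum fun f hf => le_max_of_le_left ?_
        have := exp_le_of_mem_typicalSet hf
        rw [add_sub_cancel] at this
        rw [mul_neg, mul_neg] at hhalf
        linarith
    _ ≤ excess (kpow p n) (exp (-(n * τ))) :=
        Finset.sum_le_univ_sum_of_nonneg fun f => le_max_right _ _

theorem eventually_exp_le_truncSum_kpow (hp : IsProbVec p) (hτ : τ < tiltMean p α)
    (hr : r < (1 - α) * (Hent α p - tiltMean p α)) :
    ∀ᶠ n : ℕ in atTop, exp (n * r) ≤ truncSum (kpow p n) (exp (-(n * τ))) := by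
  filter_upwards [eventually_exp_le_sum_typicalSet hp (sub_pos.2 hτ) hr] with n hsum
  refine hsum.trans ((Finset.sum_le_sum fun f hf => le_min le_rfl ?_).trans
    (Finset.sum_le_univ_sum_of_nonneg fun f => le_min (kpow_nonneg hp.1 n f) (Real.exp_pos _).le))
  simpa using le_exp_of_mem_typicalSet hf

end ExponentialBounds

section AsymptoticMajorization

theorem eventually_forall_mem_of_isCompact {X Y : Type*} [TopologicalSpace Y] {l : Filter X}
    {K : Set Y} {P : X → Y → Prop} (hK : IsCompact K)
    (hP : ∀ y ∈ K, ∀ᶠ z in l ×ˢ 𝓝 y, P z.1 z.2) : ∀ᶠ x in l, ∀ y ∈ K, P x y := by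
  simp only [← eventually_iSup, ← hK.prod_nhdsSet_eq_biSup] at hP
  exact hP.curry.mono fun _ h => h.self_of_nhdsSet

-- Solve `f x = -min (-f b) (g x / 2)` by the intermediate value theorem.
theorem exists_mem_uIcc_neg_and_neg_lt {f g : ℝ → ℝ} {a b : ℝ} (hf : Continuous f)
    (hg : Continuous g) (hgpos : ∀ x ∈ Set.uIcc a b, 0 < g x) (ha : 0 ≤ f a) (hb : f b < 0) :
    ∃ x ∈ Set.uIcc a b, f x < 0 ∧ -f x < g x := by
  have hcont : Continuous fun x => f x + min (-f b) (g x / 2) := by fun_prop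
  have hmin {x : ℝ} (hx : x ∈ Set.uIcc a b) : 0 < min (-f b) (g x / 2) :=
    lt_min (neg_pos.2 hb) (half_pos (hgpos x hx))
  obtain ⟨x, hx, hfx⟩ : (0 : ℝ) ∈ (fun x => f x + min (-f b) (g x / 2)) '' Set.uIcc a b := by
    refine intermediate_value_uIcc hcont.continuousOn (Set.mem_uIcc_of_ge ?_ ?_)
    · linarith [min_le_left (-f b) (g b / 2)]
    · linarith [hmin Set.left_mem_uIcc]
  refine ⟨x, hx, by linarith [hmin hx], ?_⟩
  linarith [min_le_right (-f b) (g x / 2), hgpos x hx]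

variable {ι κ : Type*} [Fintype ι] [Fintype κ] {p : ι → ℝ} {q : κ → ℝ} {α β τ s : ℝ}

theorem eventually_excess_kpow_le_excess_kpow (hp : IsProbVec p) (hq : IsProbVec q) (hβ : 1 ≤ β)
    (hτ : tiltMean p α < τ)
    (h : (β - 1) * (τ - Hent β q) < (1 - α) * (Hent α p - tiltMean p α)) :
    ∀ᶠ z : ℕ × ℝ in atTop ×ˢ 𝓝 τ,
      excess (kpow q z.1) (exp (-(z.1 * z.2))) ≤ excess (kpow p z.1) (exp (-(z.1 * z.2))) := by
  obtain ⟨r, hr, hr'⟩ := exists_between h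
  obtain ⟨σ, hσ, hστ⟩ := exists_between hτ
  have hlim : Tendsto (fun τ => (β - 1) * (τ - Hent β q)) (𝓝 τ) (𝓝 ((β - 1) * (τ - Hent β q))) :=
    (by fun_prop : Continuous _).continuousAt
  filter_upwards [(eventually_exp_le_excess_kpow hp hσ hr').prod_mk
    ((hlim.eventually_le_const hr).and (eventually_ge_nhds hστ))]
    with ⟨n, τ'⟩ ⟨hexcess, hrτ', hστ'⟩
  calc excess (kpow q n) (exp (-(n * τ'))) ≤ exp (n * ((β - 1) * (τ' - Hent β q))) :=
        excess_kpow_le hq hβ n τ'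
    _ ≤ exp (n * r) := by gcongr
    _ ≤ excess (kpow p n) (exp (-(n * σ))) := hexcess
    _ ≤ excess (kpow p n) (exp (-(n * τ'))) := excess_antitone _ (by gcongr)

theorem eventually_truncSum_kpow_le_truncSum_kpow (hp : IsProbVec p) (hq : IsProbVec q)
    (hβ : β ∈ Set.Icc 0 1) (hτ : τ < tiltMean q α)
    (h : (1 - β) * (Hent β p - τ) < (1 - α) * (Hent α q - tiltMean q α)) :
    ∀ᶠ z : ℕ × ℝ in atTop ×ˢ 𝓝 τ,
      truncSum (kpow p z.1) (exp (-(z.1 * z.2))) ≤ truncSum (kpow q z.1) (exp (-(z.1 * z.2))) := by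
  obtain ⟨r, hr, hr'⟩ := exists_between h
  obtain ⟨σ, hτσ, hσ⟩ := exists_between hτ
  have hlim : Tendsto (fun τ => (1 - β) * (Hent β p - τ)) (𝓝 τ) (𝓝 ((1 - β) * (Hent β p - τ))) :=
    (by fun_prop : Continuous _).continuousAt
  filter_upwards [(eventually_exp_le_truncSum_kpow hq hσ hr').prod_mk
    ((hlim.eventually_le_const hr).and (eventually_le_nhds hτσ))]
    with ⟨n, τ'⟩ ⟨htruncSum, hrτ', hτ'σ⟩
  calc truncSum (kpow p n) (exp (-(n * τ'))) ≤ exp (n * ((1 - β) * (Hent β p - τ'))) :=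
        truncSum_kpow_le hp hβ n τ'
    _ ≤ exp (n * r) := by gcongr
    _ ≤ truncSum (kpow q n) (exp (-(n * σ))) := htruncSum
    _ ≤ truncSum (kpow q n) (exp (-(n * τ'))) := truncSum_mono _ (by gcongr)

theorem exists_exponents_excess (hp : IsProbVec p) (hq : IsProbVec q)
    (hH : ∀ α, 1 ≤ α → Hent α p < Hent α q) (hτ : HentInf p < τ) (hτq : τ < Hent 1 q) :
    ∃ α β, 1 ≤ β ∧ tiltMean p α < τ ∧
      (β - 1) * (τ - Hent β q) < (1 - α) * (Hent α p - tiltMean p α) := by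
  rcases lt_or_ge (Hent 1 p) τ with hτp | hτp
  · have hlim : ∀ᶠ β in 𝓝[>] 1, τ < Hent β q :=
      nhdsWithin_le_nhds ((continuous_Hent hq).continuousAt.eventually_const_lt hτq)
    obtain ⟨β, hβτ, hβ⟩ := (hlim.and self_mem_nhdsWithin).exists
    refine ⟨1, β, hβ.le, (tiltMean_one hp).trans_lt hτp, ?_⟩
    rw [sub_self, zero_mul]
    exact mul_neg_of_pos_of_neg (sub_pos.2 hβ) (sub_neg.2 hβτ)
  · obtain ⟨A, hA, hAτ⟩ := exists_one_lt_tiltMean_lt hp hτ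
    obtain ⟨α, hα, hmean, hgap⟩ := exists_mem_uIcc_neg_and_neg_lt (a := 1) (b := A)
      (f := fun α => tiltMean p α - τ) (g := fun α => Hent α q - Hent α p)
      ((continuous_tiltMean hp).sub continuous_const)
      ((continuous_Hent hq).sub (continuous_Hent hp))
      (fun α hα => sub_pos.2 (hH α (Set.uIcc_of_le hA.le ▸ hα).1))
      (sub_nonneg.2 (hτp.trans_eq (tiltMean_one hp).symm)) (sub_neg.2 hAτ)
    rw [sub_neg] at hmean
    have hα1 : 1 < α := by
      refine lt_of_le_of_ne (Set.uIcc_of_le hA.le ▸ hα).1 fun h => ?_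
      exact hmean.not_ge (h ▸ hτp.trans_eq (tiltMean_one hp).symm)
    exact ⟨α, α, hα1.le, hmean, by linarith [mul_lt_mul_of_pos_left hgap (sub_pos.2 hα1)]⟩

theorem exists_exponents_truncSum (hp : IsProbVec p) (hq : IsProbVec q)
    (hH : ∀ α ∈ Set.Icc 0 1, Hent α p < Hent α q) (hτp : Hent 1 p < τ) (hτ : τ < tiltMean q 0) :
    ∃ α, ∃ β ∈ Set.Icc 0 1, τ < tiltMean q α ∧
      (1 - β) * (Hent β p - τ) < (1 - α) * (Hent α q - tiltMean q α) := by
  rcases lt_or_ge τ (Hent 1 q) with hτq | hτq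
  · have hlim : ∀ᶠ β in 𝓝[<] 1, Hent β p < τ :=
      nhdsWithin_le_nhds ((continuous_Hent hp).continuousAt.eventually_lt_const hτp)
    obtain ⟨β, hβτ, hβ⟩ := (hlim.and (Ico_mem_nhdsLT zero_lt_one)).exists
    refine ⟨1, β, Set.Ico_subset_Icc_self hβ, hτq.trans_eq (tiltMean_one hq).symm, ?_⟩
    rw [sub_self, zero_mul]
    exact mul_neg_of_pos_of_neg (sub_pos.2 hβ.2) (sub_neg.2 hβτ)
  · obtain ⟨α, hα, hmean, hgap⟩ := exists_mem_uIcc_neg_and_neg_lt (a := 1) (b := 0)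
      (f := fun α => τ - tiltMean q α) (g := fun α => Hent α q - Hent α p)
      (continuous_const.sub (continuous_tiltMean hq))
      ((continuous_Hent hq).sub (continuous_Hent hp))
      (fun α hα => sub_pos.2 (hH α (Set.uIcc_of_ge (zero_le_one' ℝ) ▸ hα)))
      (sub_nonneg.2 ((tiltMean_one hq).trans_le hτq)) (sub_neg.2 hτ)
    rw [Set.uIcc_of_ge zero_le_one] at hα
    rw [sub_neg] at hmean
    have hα1 : α < 1 := by
      refine lt_of_le_of_ne hα.2 fun h => hmean.not_ge ?_
      exact h ▸ (tiltMean_one hq).trans_le hτq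
    exact ⟨α, α, hα, hmean, by linarith [mul_lt_mul_of_pos_left hgap (sub_pos.2 hα1)]⟩

-- Compares `truncSum p t ≤ |supp p| * t` with the lower bound that concavity of `truncSum q`
-- extends linearly from the level `exp (-n * σ)` to all smaller ones.
theorem exists_truncSum_tail (hp : IsProbVec p) (hq : IsProbVec q)
    (h0 : Hent 0 p < Hent 0 q) :
    ∃ σ < tiltMean q 0, ∀ᶠ n : ℕ in atTop, ∀ τ, σ ≤ τ →
      truncSum (kpow p n) (exp (-(n * τ))) ≤ truncSum (kpow q n) (exp (-(n * τ))) := by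
  have hδ : 0 < (Hent 0 q - Hent 0 p) / 2 := half_pos (sub_pos.2 h0)
  set δ := (Hent 0 q - Hent 0 p) / 2 with hδ_def
  refine ⟨tiltMean q 0 - δ, sub_lt_self _ hδ, ?_⟩
  filter_upwards [eventually_exp_le_truncSum_kpow (r := Hent 0 q - tiltMean q 0 - δ) hq
    (sub_lt_self _ hδ) (α := 0) (by linarith)] with n hn τ hτ
  set σ := tiltMean q 0 - δ with hσ_def
  have hscale : exp (-(n * τ)) = exp (-(n * (τ - σ))) * exp (-(n * σ)) := by
    rw [← Real.exp_add]; ring_nf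
  calc truncSum (kpow p n) (exp (-(n * τ))) ≤ exp (n * ((1 - 0) * (Hent 0 p - τ))) :=
        truncSum_kpow_le hp (by simp) n τ
    _ = exp (-(n * (τ - σ))) * exp (n * (Hent 0 q - tiltMean q 0 - δ)) := by
        rw [← Real.exp_add, hσ_def, hδ_def]; ring_nf
    _ ≤ exp (-(n * (τ - σ))) * truncSum (kpow q n) (exp (-(n * σ))) := by gcongr
    _ ≤ truncSum (kpow q n) (exp (-(n * τ))) := by
        rw [hscale]
        refine mul_truncSum_le_truncSum_mul (kpow_nonneg hq.1 n) (Real.exp_pos _).le ?_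
        rw [Real.exp_le_one_iff, neg_nonpos]
        exact mul_nonneg n.cast_nonneg (sub_nonneg.2 hτ)

theorem eventually_forall_le_excess_kpow_le (hp : IsProbVec p) (hq : IsProbVec q)
    (hH : ∀ α, 1 ≤ α → Hent α p < Hent α q) (hinf : HentInf p < HentInf q) (hs : s < Hent 1 q) :
    ∀ᶠ n : ℕ in atTop, ∀ τ ≤ s,
      excess (kpow q n) (exp (-(n * τ))) ≤ excess (kpow p n) (exp (-(n * τ))) := by
  have hcompact : ∀ᶠ n : ℕ in atTop, ∀ τ ∈ Set.Icc (HentInf q) s,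
      excess (kpow q n) (exp (-(n * τ))) ≤ excess (kpow p n) (exp (-(n * τ))) := by
    refine eventually_forall_mem_of_isCompact isCompact_Icc fun τ hτ => ?_
    obtain ⟨α, β, hβ, hmean, h⟩ :=
      exists_exponents_excess hp hq hH (hinf.trans_le hτ.1) (hτ.2.trans_lt hs)
    exact eventually_excess_kpow_le_excess_kpow hp hq hβ hmean h
  filter_upwards [hcompact] with n hn τ hτ
  rcases le_total (HentInf q) τ with hqτ | hτq
  · exact hn τ ⟨hqτ, hτ⟩
  · refine le_of_eq_of_le (excess_eq_zero_iff.2 ?_) (excess_nonneg _ _)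
    rw [← le_HentInf_iff (isProbVec_kpow hq n), HentInf_kpow hq]
    gcongr

theorem eventually_forall_ge_truncSum_kpow_le (hp : IsProbVec p) (hq : IsProbVec q)
    (hH : ∀ α ∈ Set.Icc 0 1, Hent α p < Hent α q) (hs : Hent 1 p < s) :
    ∀ᶠ n : ℕ in atTop, ∀ τ ≥ s,
      truncSum (kpow p n) (exp (-(n * τ))) ≤ truncSum (kpow q n) (exp (-(n * τ))) := by
  obtain ⟨σ, hσ, htail⟩ := exists_truncSum_tail hp hq (hH 0 (by simp))
  have hcompact : ∀ᶠ n : ℕ in atTop, ∀ τ ∈ Set.Icc s σ,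
      truncSum (kpow p n) (exp (-(n * τ))) ≤ truncSum (kpow q n) (exp (-(n * τ))) := by
    refine eventually_forall_mem_of_isCompact isCompact_Icc fun τ hτ => ?_
    obtain ⟨α, β, hβ, hmean, h⟩ :=
      exists_exponents_truncSum hp hq hH (hs.trans_le hτ.1) (hτ.2.trans_lt hσ)
    exact eventually_truncSum_kpow_le_truncSum_kpow hp hq hβ hmean h
  filter_upwards [hcompact, htail] with n hn htail τ hτ
  exact (le_total τ σ).elim (fun hτσ => hn τ ⟨hτ, hτσ⟩) (htail τ)

theorem eventually_majorizes_kpow (hp : IsProbVec p) (hq : IsProbVec q)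
    (hH : ∀ α, 0 ≤ α → Hent α p < Hent α q) (hinf : HentInf p < HentInf q) :
    ∀ᶠ n : ℕ in atTop, Majorizes (kpow p n) (kpow q n) := by
  obtain ⟨s, hps, hsq⟩ := exists_between (hH 1 zero_le_one)
  filter_upwards [eventually_gt_atTop 0,
    eventually_forall_le_excess_kpow_le hp hq (fun α hα => hH α (zero_le_one.trans hα)) hinf hsq,
    eventually_forall_ge_truncSum_kpow_le hp hq (fun α hα => hH α hα.1) hps]
    with n hn hexcess htruncSum
  have hpn := isProbVec_kpow hp n
  have hqn := isProbVec_kpow hq n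
  refine majorizes_of_forall_excess_le hpn.1 hqn.1 (hpn.2.trans hqn.2.symm) fun t ht => ?_
  obtain ⟨τ, rfl⟩ : ∃ τ, exp (-(n * τ)) = t :=
    ⟨-log t / n, by rw [mul_div_cancel₀ _ (by positivity), neg_neg, Real.exp_log ht]⟩
  rcases le_total τ s with hτ | hτ
  · exact hexcess τ hτ
  · rw [excess_eq_sum_sub_truncSum, excess_eq_sum_sub_truncSum, hpn.2, hqn.2]
    exact sub_le_sub_left (htruncSum τ hτ) 1

end AsymptoticMajorization

section SchurConcavity

section HomogeneousKernel

variable {K : ℝ → ℝ → ℝ} {x α : ℝ}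

theorem rpow_mul_kernel_eq (hK : ∀ x t, 0 < x → 0 < t → K x (x * t) = x * K 1 t) (hx : 0 < x)
    (α : ℝ) : Set.EqOn (fun t => t ^ (α - 2) * K x t)
      (fun t => x ^ (α - 1) * ((x⁻¹ * t) ^ (α - 2) * K 1 (x⁻¹ * t))) (Set.Ioi 0) := by
  intro t ht
  have hKx : K x t = x * K 1 (x⁻¹ * t) := by
    rw [← hK x _ hx (mul_pos (inv_pos.2 hx) ht), mul_inv_cancel_left₀ hx.ne']
  have hrpow : x ^ (α - 1) * (x⁻¹) ^ (α - 2) = x := by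
    rw [Real.inv_rpow hx.le, ← Real.rpow_neg hx.le, ← Real.rpow_add hx]
    ring_nf
    exact Real.rpow_one x
  simp only [hKx, Real.mul_rpow (inv_pos.2 hx).le (le_of_lt ht)]
  linear_combination (-(t ^ (α - 2) * K 1 (x⁻¹ * t))) * hrpow

theorem integrableOn_rpow_mul_kernel (hK : ∀ x t, 0 < x → 0 < t → K x (x * t) = x * K 1 t)
    (hK0 : ∀ t, 0 < t → K 0 t = 0)
    (hint : IntegrableOn (fun t => t ^ (α - 2) * K 1 t) (Set.Ioi 0)) (hx : 0 ≤ x) :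
    IntegrableOn (fun t => t ^ (α - 2) * K x t) (Set.Ioi 0) := by
  rcases hx.eq_or_lt with rfl | hx
  · refine integrableOn_zero.congr_fun (fun t ht => ?_) measurableSet_Ioi
    rw [hK0 t ht, mul_zero]
  · refine IntegrableOn.congr_fun ?_ (rpow_mul_kernel_eq hK hx α).symm measurableSet_Ioi
    have hscaled := (integrableOn_Ioi_comp_mul_left_iff (fun t => t ^ (α - 2) * K 1 t) 0
      (inv_pos.2 hx)).2 (by rwa [mul_zero])
    exact Integrable.const_mul hscaled _

theorem integral_rpow_mul_kernel (hK : ∀ x t, 0 < x → 0 < t → K x (x * t) = x * K 1 t)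
    (hK0 : ∀ t, 0 < t → K 0 t = 0) (hx : 0 ≤ x) :
    ∫ t in Set.Ioi 0, t ^ (α - 2) * K x t =
      rpowSupp x α * ∫ t in Set.Ioi 0, t ^ (α - 2) * K 1 t := by
  rcases hx.eq_or_lt with rfl | hx
  · rw [rpowSupp_zero_left, zero_mul]
    refine setIntegral_eq_zero_of_forall_eq_zero fun t ht => ?_
    rw [hK0 t ht, mul_zero]
  · rw [setIntegral_congr_fun measurableSet_Ioi (rpow_mul_kernel_eq hK hx α), integral_const_mul,
      integral_comp_mul_left_Ioi (fun t => t ^ (α - 2) * K 1 t) 0 (inv_pos.2 hx), mul_zero, inv_inv,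
      smul_eq_mul, ← mul_assoc, rpowSupp_of_pos hx, ← Real.rpow_add_one hx.ne', sub_add_cancel]

variable {ι κ : Type*} [Fintype ι] [Fintype κ] {p : ι → ℝ} {q : κ → ℝ}

theorem integral_rpow_mul_sum_kernel (hK : ∀ x t, 0 < x → 0 < t → K x (x * t) = x * K 1 t)
    (hK0 : ∀ t, 0 < t → K 0 t = 0)
    (hint : IntegrableOn (fun t => t ^ (α - 2) * K 1 t) (Set.Ioi 0)) (hp : ∀ i, 0 ≤ p i) :
    ∫ t in Set.Ioi 0, ∑ i, t ^ (α - 2) * K (p i) t =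
      fA α p * ∫ t in Set.Ioi 0, t ^ (α - 2) * K 1 t := by
  rw [integral_finsetSum _ fun i _ => integrableOn_rpow_mul_kernel hK hK0 hint (hp i),
    fA_eq_sum_rpowSupp, Finset.sum_mul]
  exact Finset.sum_congr rfl fun i _ => integral_rpow_mul_kernel hK hK0 (hp i)

theorem fA_le_fA_of_forall_sum_kernel_le
    (hK : ∀ x t, 0 < x → 0 < t → K x (x * t) = x * K 1 t) (hK0 : ∀ t, 0 < t → K 0 t = 0)
    (hint : IntegrableOn (fun t => t ^ (α - 2) * K 1 t) (Set.Ioi 0))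
    (hpos : 0 < ∫ t in Set.Ioi 0, t ^ (α - 2) * K 1 t) (hp : ∀ i, 0 ≤ p i) (hq : ∀ j, 0 ≤ q j)
    (h : ∀ t, 0 < t → ∑ j, K (q j) t ≤ ∑ i, K (p i) t) : fA α q ≤ fA α p := by
  refine le_of_mul_le_mul_right ?_ hpos
  rw [← integral_rpow_mul_sum_kernel hK hK0 hint hp, ← integral_rpow_mul_sum_kernel hK hK0 hint hq]
  refine setIntegral_mono_on
    (integrable_finsetSum _ fun j _ => integrableOn_rpow_mul_kernel hK hK0 hint (hq j))
    (integrable_finsetSum _ fun i _ => integrableOn_rpow_mul_kernel hK hK0 hint (hp i))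
    measurableSet_Ioi fun t ht => ?_
  rw [← Finset.mul_sum, ← Finset.mul_sum]
  exact mul_le_mul_of_nonneg_left (h t ht) (Real.rpow_nonneg (le_of_lt ht) _)

theorem setIntegral_rpow_mul_pos {f : ℝ → ℝ} (hf : ∀ t, 0 < t → 0 ≤ f t)
    (hf1 : ∀ t ∈ Set.Ioo 0 1, 0 < f t)
    (hint : IntegrableOn (fun t => t ^ (α - 2) * f t) (Set.Ioi 0)) :
    0 < ∫ t in Set.Ioi 0, t ^ (α - 2) * f t := by
  refine (setIntegral_pos_iff_support_of_nonneg_ae ?_ hint).2 ?_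
  · exact ae_restrict_of_forall_mem measurableSet_Ioi fun t ht =>
      mul_nonneg (Real.rpow_nonneg (le_of_lt ht) _) (hf t ht)
  · have hsub : Set.Ioo (0 : ℝ) 1 ⊆
        Function.support (fun t => t ^ (α - 2) * f t) ∩ Set.Ioi 0 := fun t ht =>
      ⟨(mul_pos (Real.rpow_pos_of_pos ht.1 _) (hf1 t ht)).ne', ht.1⟩
    exact (by simp : (0 : ENNReal) < volume (Set.Ioo (0 : ℝ) 1)).trans_le (measure_mono hsub)

end HomogeneousKernel

section Kernels

variable {α : ℝ}

theorem integrableOn_Ioc_rpow (hα : -1 < α) : IntegrableOn (fun t : ℝ => t ^ α) (Set.Ioc 0 1) :=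
  (intervalIntegrable_iff_integrableOn_Ioc_of_le zero_le_one).1
    (intervalIntegral.intervalIntegrable_rpow' hα)

theorem integrableOn_rpow_mul_max (hα : 1 < α) :
    IntegrableOn (fun t : ℝ => t ^ (α - 2) * max (1 - t) 0) (Set.Ioi 0) := by
  rw [← Set.Ioc_union_Ioi_eq_Ioi zero_le_one]
  refine IntegrableOn.union ?_ ?_
  · refine IntegrableOn.congr_fun ((integrableOn_Ioc_rpow (α := α - 2) (by linarith)).sub
      (integrableOn_Ioc_rpow (α := α - 2 + 1) (by linarith))) (fun t ht => ?_) measurableSet_Ioc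
    simp only [Pi.sub_apply]
    rw [max_eq_left (sub_nonneg.2 ht.2), Real.rpow_add_one ht.1.ne', mul_sub, mul_one]
  · refine integrableOn_zero.congr_fun (fun t ht => ?_) measurableSet_Ioi
    rw [max_eq_right (sub_nonpos.2 (le_of_lt ht)), mul_zero]

theorem integrableOn_rpow_mul_min (hα0 : 0 < α) (hα1 : α < 1) :
    IntegrableOn (fun t : ℝ => t ^ (α - 2) * min 1 t) (Set.Ioi 0) := by
  rw [← Set.Ioc_union_Ioi_eq_Ioi zero_le_one]
  refine IntegrableOn.union ?_ ?_
  · refine (integrableOn_Ioc_rpow (α := α - 2 + 1) (by linarith)).congr_fun (fun t ht => ?_)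
      measurableSet_Ioc
    simp only [min_eq_right ht.2, Real.rpow_add_one ht.1.ne']
  · refine (integrableOn_Ioi_rpow_of_lt (a := α - 2) (by linarith) zero_lt_one).congr_fun
      (fun t ht => ?_) measurableSet_Ioi
    rw [min_eq_left (le_of_lt ht), mul_one]

end Kernels

variable {ι κ : Type*} [Fintype ι] [Fintype κ] {p : ι → ℝ} {q : κ → ℝ} {α : ℝ}

theorem Majorizes.fA_le (h : Majorizes p q) (hp : ∀ i, 0 ≤ p i) (hq : ∀ j, 0 ≤ q j)
    (hα : 1 < α) : fA α q ≤ fA α p := by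
  refine fA_le_fA_of_forall_sum_kernel_le (K := fun x t => max (x - t) 0)
    (fun x t hx _ => ?_) (fun t ht => max_eq_right (by linarith)) (integrableOn_rpow_mul_max hα)
    (setIntegral_rpow_mul_pos (fun t _ => le_max_right _ _) (fun t ht => ?_)
      (integrableOn_rpow_mul_max hα)) hp hq fun t ht => h.excess_le ht.le
  · rw [mul_max_of_nonneg _ _ hx.le, mul_sub, mul_one, mul_zero]
  · exact lt_max_of_lt_left (sub_pos.2 ht.2)

theorem Majorizes.le_fA (h : Majorizes p q) (hp : ∀ i, 0 ≤ p i) (hq : ∀ j, 0 ≤ q j)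
    (hα0 : 0 < α) (hα1 : α < 1) : fA α p ≤ fA α q := by
  refine fA_le_fA_of_forall_sum_kernel_le (K := min)
    (fun x t hx _ => ?_) (fun t ht => min_eq_left ht.le) (integrableOn_rpow_mul_min hα0 hα1)
    (setIntegral_rpow_mul_pos (fun t ht => le_min zero_le_one ht.le)
      (fun t ht => lt_min zero_lt_one ht.1) (integrableOn_rpow_mul_min hα0 hα1))
    hq hp fun t ht => h.truncSum_le ht.le
  rw [mul_min_of_nonneg _ _ hx.le, mul_one]

theorem Majorizes.Hent_le_of_ne_one (h : Majorizes p q) (hp : IsProbVec p) (hq : IsProbVec q)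
    (hα : 0 < α) (hα1 : α ≠ 1) : Hent α p ≤ Hent α q := by
  rw [Hent_of_ne_one hα1, Hent_of_ne_one hα1]
  rcases hα1.lt_or_gt with hα1 | hα1
  · exact mul_le_mul_of_nonneg_left
      (Real.log_le_log (fA_pos hp α) (h.le_fA hp.1 hq.1 hα hα1))
      (one_div_nonneg.2 (sub_nonneg.2 hα1.le))
  · exact mul_le_mul_of_nonpos_left
      (Real.log_le_log (fA_pos hq α) (h.fA_le hp.1 hq.1 hα1))
      (one_div_nonpos.2 (sub_nonpos.2 hα1.le))

theorem Majorizes.Hent_le (h : Majorizes p q) (hp : IsProbVec p) (hq : IsProbVec q)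
    (hα : 0 ≤ α) : Hent α p ≤ Hent α q := by
  refine le_of_tendsto_of_tendsto (b := 𝓝[>] α)
    ((continuous_Hent hp).continuousAt.tendsto.mono_left nhdsWithin_le_nhds)
    ((continuous_Hent hq).continuousAt.tendsto.mono_left nhdsWithin_le_nhds) ?_
  have hne : ∀ᶠ β in 𝓝[>] α, β ≠ 1 := by
    rcases eq_or_ne α 1 with rfl | hα1
    · filter_upwards [self_mem_nhdsWithin] with β hβ using ne_of_gt hβ
    · exact eventually_ne_nhdsWithin hα1
  filter_upwards [self_mem_nhdsWithin, hne] with β hβ hβ1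
  exact h.Hent_le_of_ne_one hp hq (hα.trans_lt hβ) hβ1

theorem Majorizes.HentInf_le (h : Majorizes p q) (hp : IsProbVec p) (hq : IsProbVec q) :
    HentInf p ≤ HentInf q := by
  rw [le_HentInf_iff hq, ← excess_eq_zero_iff]
  exact le_antisymm ((h.excess_le (Real.exp_pos _).le).trans_eq
    (excess_eq_zero_iff.2 (le_exp_neg_HentInf hp))) (excess_nonneg _ _)

end SchurConcavity

theorem jensen_asymptotic_majorization_general {ι κ : Type*} [Fintype ι] [Fintype κ]
    (p : ι → ℝ) (q : κ → ℝ) (hp : IsProbVec p) (hq : IsProbVec q) :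
    (((∀ α : ℝ, 0 ≤ α → Hent α p < Hent α q) ∧ HentInf p < HentInf q) →
      ∃ N : ℕ, ∀ n : ℕ, N ≤ n → Majorizes (kpow p n) (kpow q n)) ∧
    ((∃ n : ℕ, 1 ≤ n ∧ Majorizes (kpow p n) (kpow q n)) →
      (∀ α : ℝ, 0 ≤ α → Hent α p ≤ Hent α q) ∧ HentInf p ≤ HentInf q) := by
  refine ⟨fun ⟨hH, hinf⟩ => eventually_atTop.1 (eventually_majorizes_kpow hp hq hH hinf), ?_⟩
  rintro ⟨n, hn, hmaj⟩
  have hn : (0 : ℝ) < n := Nat.cast_pos.2 hn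
  have hpn := isProbVec_kpow hp n
  have hqn := isProbVec_kpow hq n
  constructor
  · intro α hα
    have := hmaj.Hent_le hpn hqn hα
    rw [Hent_kpow hp, Hent_kpow hq] at this
    exact le_of_mul_le_mul_left this hn
  · have := hmaj.HentInf_le hpn hqn
    rw [HentInf_kpow hp, HentInf_kpow hq] at this
    exact le_of_mul_le_mul_left this hn

/-- **Exact asymptotic majorization (Jensen).**  If all Rényi entropies
`H_α` for `α ∈ [0, ∞]` are strictly ordered, then `p^{⊗n}` majorizes `q^{⊗n}`
for all sufficiently large `n`; conversely, if `p^{⊗n}` majorizes `q^{⊗n}` for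
some `n ≥ 1` then the inequalities hold non-strictly. -/
theorem jensen_asymptotic_majorization
    {m m' : ℕ} (p : Fin m → ℝ) (q : Fin m' → ℝ)
    (hp : IsProbVec p) (hq : IsProbVec q) :
    (((∀ α : ℝ, 0 ≤ α → Hent α p < Hent α q) ∧ HentInf p < HentInf q) →
      ∃ N : ℕ, ∀ n : ℕ, N ≤ n → Majorizes (kpow p n) (kpow q n)) ∧
    ((∃ n : ℕ, 1 ≤ n ∧ Majorizes (kpow p n) (kpow q n)) →
      (∀ α : ℝ, 0 ≤ α → Hent α p ≤ Hent α q) ∧ HentInf p ≤ HentInf q) := by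
  exact jensen_asymptotic_majorization_general p q hp hq
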